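/- For every commutative ring R, every R-algebra A, and every natural number n, there exists an n-jet algebra of A over R; that is, there exist an R-algebra J and bijections θ_C : Hom_{R-alg}(J, C) → Hom_{R-alg}(A, C[t]/(t^{n+1})), one for each commutative R-algebra C, which are natural in C. -/

import Mathlib

/-!
A homomorphism from a polynomial ring `R[xₛ]` to `C[t]/(tⁿ⁺¹)` is a free choice of values, that is,
of the `n + 1` coefficients of each value. So the jet algebra of `R[xₛ]` is the polynomial ring in
variables `xₛ⁽⁰⁾, …, xₛ⁽ⁿ⁾`, with universal homomorphism `xₛ ↦ ∑ xₛ⁽ⁱ⁾ tⁱ`. If `u` from `P` to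
`J[t]/(tⁿ⁺¹)` is universal for `P` and `K` is an ideal of `P`, then the homomorphisms `J → C` for
which the induced `P → C[t]/(tⁿ⁺¹)` factors through `P / K` are those killing every coefficient of
every `u p` with `p ∈ K`, so the quotient of `J` by these coefficients is a jet algebra of `P / K`.
Every algebra is a quotient of a polynomial ring.
-/

open Polynomial

universe u

/-- The truncated polynomial ring `C[t]/(t^{n+1})`. -/
abbrev TruncPoly (C : Type u) [CommRing C] (n : ℕ) : Type u :=
  Polynomial C ⧸ Ideal.span {(X : Polynomial C) ^ (n + 1)}

/-- The `R`-algebra homomorphism `C[t]/(t^{n+1}) → C'[t]/(t^{n+1})` applying an `R`-algebra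
homomorphism `g : C → C'` to coefficients. -/
noncomputable def truncMap {R C C' : Type u} [CommRing R] [CommRing C] [CommRing C']
    [Algebra R C] [Algebra R C'] (g : C →ₐ[R] C') (n : ℕ) :
    TruncPoly C n →ₐ[R] TruncPoly C' n :=
  Ideal.Quotient.liftₐ _
    ((Ideal.Quotient.mkₐ R (Ideal.span {(X : Polynomial C') ^ (n + 1)})).comp
      (Polynomial.mapAlgHom g)) (by
    intro a ha
    rw [Ideal.mem_span_singleton'] at ha
    obtain ⟨b, rfl⟩ := ha
    simp only [AlgHom.comp_apply, map_mul, map_pow]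
    have h1 : (Polynomial.mapAlgHom g) (X : Polynomial C) = (X : Polynomial C') := by
      simp [Polynomial.mapAlgHom]
    rw [h1, ← map_pow, Ideal.Quotient.mkₐ_eq_mk]
    have h2 : (Ideal.Quotient.mk (Ideal.span {(X : Polynomial C') ^ (n + 1)}))
        ((X : Polynomial C') ^ (n + 1)) = 0 :=
      Ideal.Quotient.eq_zero_iff_mem.mpr (Ideal.subset_span rfl)
    rw [h2, mul_zero])

/-- An `n`-jet algebra of `A` over `R`: an `R`-algebra `J` together with bijections
`θ_C : Hom_{R-alg}(J, C) ≃ Hom_{R-alg}(A, C[t]/(t^{n+1}))`, natural in `C`. -/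
structure JetAlgebra (R A : Type u) [CommRing R] [CommRing A] [Algebra R A] (n : ℕ) where
  carrier : Type u
  [commRing : CommRing carrier]
  [alg : Algebra R carrier]
  θ : ∀ (C : Type u) [CommRing C] [Algebra R C],
      (carrier →ₐ[R] C) ≃ (A →ₐ[R] TruncPoly C n)
  naturality : ∀ (C C' : Type u) [CommRing C] [Algebra R C] [CommRing C'] [Algebra R C']
      (g : C →ₐ[R] C') (ψ : carrier →ₐ[R] C),
      θ C' (g.comp ψ) = (truncMap g n).comp (θ C ψ)

namespace TruncPoly

section Coefficients

variable (C : Type u) [CommRing C] (n : ℕ)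

theorem ker_toFn : LinearMap.ker (toFn (R := C) (n + 1)) =
    (Ideal.span {(X : C[X]) ^ (n + 1)}).restrictScalars C := by
  ext p
  simp [toFn, funext_iff, Ideal.mem_span_singleton, X_pow_dvd_iff, Fin.forall_iff]

/-- The coordinates of a truncated polynomial: its coefficients in degrees `0, …, n`. -/
noncomputable def coeffEquiv : TruncPoly C n ≃ₗ[C] (Fin (n + 1) → C) :=
  (Submodule.Quotient.restrictScalarsEquiv C (Ideal.span {(X : C[X]) ^ (n + 1)})).symm ≪≫ₗ
    Submodule.quotEquivOfEq _ _ (ker_toFn C n).symm ≪≫ₗ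
    (toFn (R := C) (n + 1)).quotKerEquivOfSurjective (by classical exact surjective_toFn (n + 1))

variable {C n}

@[simp]
theorem coeffEquiv_mk (p : C[X]) (i : Fin (n + 1)) :
    coeffEquiv C n (Ideal.Quotient.mk _ p) i = p.coeff i :=
  rfl

end Coefficients

section Map

variable {R C C' C'' : Type u} [CommRing R] [CommRing C] [CommRing C'] [CommRing C'']
  [Algebra R C] [Algebra R C'] [Algebra R C''] {n : ℕ}

theorem truncMap_mk (g : C →ₐ[R] C') (p : C[X]) :
    truncMap g n (Ideal.Quotient.mk _ p) = Ideal.Quotient.mk _ (p.map (g : C →+* C')) :=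
  rfl

@[simp]
theorem coeffEquiv_truncMap (g : C →ₐ[R] C') (x : TruncPoly C n) (i : Fin (n + 1)) :
    coeffEquiv C' n (truncMap g n x) i = g (coeffEquiv C n x i) := by
  obtain ⟨p, rfl⟩ := Ideal.Quotient.mk_surjective x
  rw [truncMap_mk, coeffEquiv_mk, coeffEquiv_mk, coeff_map, RingHom.coe_coe]

theorem truncMap_comp (g : C' →ₐ[R] C'') (f : C →ₐ[R] C') :
    truncMap (g.comp f) n = (truncMap g n).comp (truncMap f n) := by
  ext x : 1
  apply (coeffEquiv C'' n).injective
  ext i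
  simp

theorem truncMap_eq_zero_iff (g : C →ₐ[R] C') (x : TruncPoly C n) :
    truncMap g n x = 0 ↔ ∀ i, g (coeffEquiv C n x i) = 0 := by
  simp only [← (coeffEquiv C' n).map_eq_zero_iff (x := truncMap g n x), funext_iff,
    coeffEquiv_truncMap, Pi.zero_apply]

/-- The ideal of `C` generated by all coefficients of the elements of a set `S` of truncated
polynomials; it cuts out the locus where all elements of `S` vanish. -/
def coeffIdeal (S : Set (TruncPoly C n)) : Ideal C :=
  Ideal.span {c | ∃ x ∈ S, ∃ i, coeffEquiv C n x i = c}

theorem coeffIdeal_le_ker_iff (S : Set (TruncPoly C n)) (g : C →ₐ[R] C') :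
    coeffIdeal S ≤ RingHom.ker g ↔ ∀ x ∈ S, truncMap g n x = 0 := by
  simp only [coeffIdeal, Ideal.span_le, truncMap_eq_zero_iff]
  constructor
  · exact fun h x hx i ↦ h ⟨x, hx, i, rfl⟩
  · rintro h _ ⟨x, hx, i, rfl⟩
    exact h x hx i

end Map

end TruncPoly

open TruncPoly

/-- A homomorphism `u : A → J[t]/(t^{n+1})` is universal if every homomorphism
`A → C[t]/(t^{n+1})` is obtained from it by applying a unique homomorphism `J → C` to
coefficients. By Yoneda, this is the data of an `n`-jet algebra in terms of the image `u` of
the identity of `J`. -/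
def IsUniversalJet {R J : Type u} {A : Type*} [CommRing R] [CommRing J] [Semiring A]
    [Algebra R J] [Algebra R A] {n : ℕ} (u : A →ₐ[R] TruncPoly J n) : Prop :=
  ∀ (C : Type u) [CommRing C] [Algebra R C],
    Function.Bijective fun ψ : J →ₐ[R] C ↦ (truncMap ψ n).comp u

/-- The jet algebra with a given universal homomorphism. -/
noncomputable def IsUniversalJet.jetAlgebra {R A J : Type u} [CommRing R] [CommRing A]
    [CommRing J] [Algebra R A] [Algebra R J] {n : ℕ} {u : A →ₐ[R] TruncPoly J n}
    (hu : IsUniversalJet u) : JetAlgebra R A n where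
  carrier := J
  θ C := Equiv.ofBijective _ (hu C)
  naturality C C' _ _ _ _ g ψ := by
    simp only [Equiv.ofBijective_apply, truncMap_comp, AlgHom.comp_assoc]

section PolynomialRing

variable (R σ : Type u) [CommRing R] (n : ℕ)

/-- The universal jet of the polynomial ring on `σ`: the variable `s` is sent to the truncated
polynomial whose coefficients are the independent variables `(s, 0), …, (s, n)`. -/
noncomputable def genericJet :
    MvPolynomial σ R →ₐ[R] TruncPoly (MvPolynomial (σ × Fin (n + 1)) R) n :=
  MvPolynomial.aeval fun s ↦ (coeffEquiv _ n).symm fun i ↦ MvPolynomial.X (s, i)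

variable {R σ n}

theorem coeffEquiv_truncMap_genericJet_X {C : Type u} [CommRing C] [Algebra R C]
    (ψ : MvPolynomial (σ × Fin (n + 1)) R →ₐ[R] C) (s : σ) (i : Fin (n + 1)) :
    coeffEquiv C n (truncMap ψ n (genericJet R σ n (MvPolynomial.X s))) i =
      ψ (MvPolynomial.X (s, i)) := by
  simp [genericJet]

theorem isUniversalJet_genericJet : IsUniversalJet (genericJet R σ n) := by
  intro C _ _
  constructor
  · intro ψ ψ' h
    ext ⟨s, i⟩
    have hs := congrArg (coeffEquiv C n · i) (DFunLike.congr_fun h (MvPolynomial.X s))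
    simpa only [AlgHom.comp_apply, coeffEquiv_truncMap_genericJet_X] using hs
  · intro φ
    refine ⟨MvPolynomial.aeval fun si ↦ coeffEquiv C n (φ (MvPolynomial.X si.1)) si.2, ?_⟩
    ext s : 1
    apply (coeffEquiv C n).injective
    ext i
    simp only [AlgHom.comp_apply, coeffEquiv_truncMap_genericJet_X, MvPolynomial.aeval_X]

end PolynomialRing

section Quotient

variable {R J : Type u} {P A : Type*} [CommRing R] [CommRing J] [CommRing P] [CommRing A]
  [Algebra R J] [Algebra R P] [Algebra R A] {n : ℕ}
  (u : P →ₐ[R] TruncPoly J n) (f : P →ₐ[R] A)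

/-- The ideal of `J` generated by the coefficients of the `u p`, where `p` runs over the relations
`f p = 0`. -/
def jetIdeal : Ideal J :=
  coeffIdeal (u '' RingHom.ker f)

theorem jetIdeal_le_ker_iff {C : Type u} [CommRing C] [Algebra R C] (ψ : J →ₐ[R] C) :
    jetIdeal u f ≤ RingHom.ker ψ ↔ RingHom.ker f ≤ RingHom.ker ((truncMap ψ n).comp u) := by
  rw [jetIdeal, coeffIdeal_le_ker_iff, Set.forall_mem_image]
  rfl

variable {f} (hf : Function.Surjective f)

/-- The homomorphism `A → (J / jetIdeal u f)[t]/(t^{n+1})` induced by `u` along the surjection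
`f : P → A`. -/
noncomputable def quotientJet : A →ₐ[R] TruncPoly (J ⧸ jetIdeal u f) n :=
  AlgHom.liftOfSurjective f hf ((truncMap (Ideal.Quotient.mkₐ R (jetIdeal u f)) n).comp u)
    ((jetIdeal_le_ker_iff u f _).1 (Ideal.Quotient.mkₐ_ker R _).ge)

theorem quotientJet_comp : (quotientJet u hf).comp f =
    (truncMap (Ideal.Quotient.mkₐ R (jetIdeal u f)) n).comp u :=
  AlgHom.liftOfSurjective_comp f hf _ _

theorem truncMap_comp_quotientJet_comp {C : Type u} [CommRing C] [Algebra R C]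
    (ψ : J ⧸ jetIdeal u f →ₐ[R] C) :
    ((truncMap ψ n).comp (quotientJet u hf)).comp f =
      (truncMap (ψ.comp (Ideal.Quotient.mkₐ R (jetIdeal u f))) n).comp u := by
  rw [AlgHom.comp_assoc, quotientJet_comp, truncMap_comp, AlgHom.comp_assoc]

variable {u}

theorem IsUniversalJet.quotientJet (hu : IsUniversalJet u) :
    IsUniversalJet (quotientJet u hf) := by
  intro C _ _
  constructor
  · intro ψ ψ' h
    apply Ideal.Quotient.algHom_ext
    apply (hu C).injective
    simpa only [truncMap_comp_quotientJet_comp] using congrArg (AlgHom.comp · f) h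
  · intro φ
    obtain ⟨ψ, hψ : (truncMap ψ n).comp u = φ.comp f⟩ := (hu C).surjective (φ.comp f)
    have hker : RingHom.ker f ≤ RingHom.ker ((truncMap ψ n).comp u) := by
      intro p hp
      rw [RingHom.mem_ker] at hp ⊢
      rw [hψ, AlgHom.comp_apply, hp, map_zero]
    obtain ⟨χ, hχ⟩ : ∃ χ : J ⧸ jetIdeal u f →ₐ[R] C, χ.comp (Ideal.Quotient.mkₐ R _) = ψ :=
      ⟨_, Ideal.Quotient.liftₐ_comp _ ψ ((jetIdeal_le_ker_iff u f ψ).2 hker)⟩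
    refine ⟨χ, ?_⟩
    rw [← AlgHom.cancel_right hf, truncMap_comp_quotientJet_comp, hχ, hψ]

end Quotient

/-- for every commutative ring `R`, every `R`-algebra `A` and every `n`, an
`n`-jet algebra of `A` over `R` exists. -/
theorem stmt5 (R A : Type u) [CommRing R] [CommRing A] [Algebra R A] (n : ℕ) :
    Nonempty (JetAlgebra R A n) := by
  have hsurj : Function.Surjective (MvPolynomial.aeval (R := R) (id : A → A)) :=
    fun a ↦ ⟨MvPolynomial.X a, MvPolynomial.aeval_X _ a⟩
  exact ⟨(isUniversalJet_genericJet.quotientJet hsurj).jetAlgebra⟩
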